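/- arXiv:0706.2141 — 2 statements merged into one kernel-verified Lean document; each statement's English description precedes it below -/
import Mathlib

section
/- Let E : M_d ⊗ M_b → M_b be a unital completely positive linear map and ρ̂ a positive definite b×b density matrix such that Tr_{M_d}(E*(ρ̂)) = ρ̂, where E* is the Hilbert–Schmidt adjoint of E. Define φ̂_1 := E*(ρ̂) ∈ M_d ⊗ M_b and recursively φ̂_n := (id_{M_d^{⊗(n−1)}} ⊗ E*)(φ̂_{n−1}) ∈ M_d^{⊗n} ⊗ M_b, and set ω̂_n := Tr_{M_b}(φ̂_n). Then each ω̂_n is a density matrix on (ℂ^d)^{⊗n}, and there exists β ≥ 1 (one may take β = b divided by the smallest eigenvalue of ρ̂) such that ω̂_n ≤ β·(ω̂_k ⊗ ω̂_{n−k}) in the Loewner order for every n and every 0 < k < n. -/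
open Matrix
open scoped ComplexOrder

/-- The Kronecker product of a matrix on `(ℂ^d)^{⊗k}` and a matrix on `(ℂ^d)^{⊗(n-k)}`,
viewed as a matrix on `(ℂ^d)^{⊗n}` via the canonical identification of `Fin n` with
`Fin k ⊕ Fin (n-k)`. -/
def tkron {d n k : ℕ} (h : k ≤ n)
    (M : Matrix (Fin k → Fin d) (Fin k → Fin d) ℂ)
    (N : Matrix (Fin (n - k) → Fin d) (Fin (n - k) → Fin d) ℂ) :
    Matrix (Fin n → Fin d) (Fin n → Fin d) ℂ :=
  Matrix.of fun x y =>
    M (fun i => x ⟨i.1, lt_of_lt_of_le i.2 h⟩) (fun i => y ⟨i.1, lt_of_lt_of_le i.2 h⟩) *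
      N (fun j => x ⟨k + j.1, by have := j.2; omega⟩)
        (fun j => y ⟨k + j.1, by have := j.2; omega⟩)

/-- Complete positivity of a map `E : M_d ⊗ M_b → M_b`: for every `k ≥ 1`, the blockwise
extension `id_{M_k} ⊗ E` preserves positive semidefiniteness. -/
def IsCPmap (d b : ℕ)
    (E : Matrix (Fin d × Fin b) (Fin d × Fin b) ℂ →ₗ[ℂ] Matrix (Fin b) (Fin b) ℂ) :
    Prop :=
  ∀ (k : ℕ), 1 ≤ k →
    ∀ X : Matrix (Fin k × (Fin d × Fin b)) (Fin k × (Fin d × Fin b)) ℂ, X.PosSemidef →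
      (Matrix.of fun p q : Fin k × Fin b =>
        E (Matrix.of fun u v : Fin d × Fin b => X (p.1, u) (q.1, v)) p.2 q.2).PosSemidef

/-- The recursively defined states `φ̂_n = (id^{⊗(n-1)} ⊗ E*) ∘ ⋯ ∘ (id ⊗ E*) ∘ E* (ρ̂)`
on `M_d^{⊗n} ⊗ M_b` (with `φ̂_0 = ρ̂`); the newly created `M_d` factor at each step is the
last tensor factor. -/
noncomputable def fcPhi {d b : ℕ}
    (Estar : Matrix (Fin b) (Fin b) ℂ →ₗ[ℂ] Matrix (Fin d × Fin b) (Fin d × Fin b) ℂ)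
    (ρ : Matrix (Fin b) (Fin b) ℂ) :
    (n : ℕ) → Matrix ((Fin n → Fin d) × Fin b) ((Fin n → Fin d) × Fin b) ℂ
  | 0 => Matrix.of fun p q => ρ p.2 q.2
  | n + 1 => Matrix.of fun p q =>
      Estar (Matrix.of fun i j => fcPhi Estar ρ n (Fin.init p.1, i) (Fin.init q.1, j))
        (p.1 (Fin.last n), p.2) (q.1 (Fin.last n), q.2)

/-- The local density matrices `ω̂_n = Tr_{M_b} φ̂_n` of the finitely correlated state. -/
noncomputable def fcOmega {d b : ℕ}
    (Estar : Matrix (Fin b) (Fin b) ℂ →ₗ[ℂ] Matrix (Fin d × Fin b) (Fin d × Fin b) ℂ)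
    (ρ : Matrix (Fin b) (Fin b) ℂ) (n : ℕ) :
    Matrix (Fin n → Fin d) (Fin n → Fin d) ℂ :=
  Matrix.of fun x y => ∑ i : Fin b, fcPhi Estar ρ n (x, i) (y, i)

/-!
Let `ω̂_k = Tr_{M_b} φ̂_k`, and let `λ > 0` be the smallest eigenvalue of `ρ̂`. A positive
semidefinite `X` on `ℂ^m ⊗ ℂ^b` satisfies `X ≤ b • (Tr_{M_b} X ⊗ 1)`, and `1 ≤ λ⁻¹ • ρ̂`, so
`φ̂_k ≤ (b / λ) • (ω̂_k ⊗ ρ̂)`. The map `E*` is completely positive, being the adjoint of a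
completely positive map, so applying `id ⊗ E*` a further `n - k` times preserves this inequality.
On the left it produces `φ̂_n`; on the right it acts on the second factor only and produces
`(b / λ) • (ω̂_k ⊗ φ̂_{n-k})`. Tracing out `M_b` gives the factorization bound.
-/

section LoewnerOrder

open scoped Kronecker MatrixOrder

variable {m n ι 𝕜 : Type*} [RCLike 𝕜]

theorem posSemidef_of_dotProduct_mulVec_nonneg [Fintype n] {M : Matrix n n ℂ}
    (h : ∀ v : n → ℂ, 0 ≤ star v ⬝ᵥ (M *ᵥ v)) : M.PosSemidef := by
  classical
  rw [← isPositive_toEuclideanLin_iff, LinearMap.isPositive_iff_complex]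
  intro v
  have inner_eq : inner ℂ (M.toEuclideanLin v) v = star (star v.ofLp ⬝ᵥ (M *ᵥ v.ofLp)) := by
    rw [← inner_conj_symm, EuclideanSpace.inner_eq_star_dotProduct, dotProduct_comm]
    rfl
  rw [inner_eq, (IsSelfAdjoint.of_nonneg (h v.ofLp)).star_eq]
  obtain ⟨re_nonneg, im_eq⟩ := Complex.nonneg_iff.mp (h v.ofLp)
  exact ⟨Complex.ext rfl im_eq, re_nonneg⟩

theorem trace_mul_nonneg_of_posSemidef [Fintype n] {A B : Matrix n n 𝕜}
    (hA : A.PosSemidef) (hB : B.PosSemidef) : 0 ≤ (A * B).trace := by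
  classical
  obtain ⟨C, rfl⟩ := CStarAlgebra.nonneg_iff_eq_star_mul_self.mp hB.nonneg
  rw [star_eq_conjTranspose, ← Matrix.mul_assoc, trace_mul_comm, ← Matrix.mul_assoc]
  exact (hA.mul_mul_conjTranspose_same C).trace_nonneg

theorem posSemidef_iff_forall_trace_mul_nonneg [Fintype n] {M : Matrix n n ℂ} :
    M.PosSemidef ↔ ∀ A : Matrix n n ℂ, A.PosSemidef → 0 ≤ (A * M).trace := by
  refine ⟨fun hM A hA => trace_mul_nonneg_of_posSemidef hA hM,
    fun h => posSemidef_of_dotProduct_mulVec_nonneg fun v => ?_⟩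
  have := h _ (posSemidef_vecMulVec_self_star v)
  rwa [vecMulVec_mul, trace_vecMulVec, dotProduct_comm, ← dotProduct_mulVec] at this

theorem kronecker_le_kronecker_right [Finite m] [Finite n] {A : Matrix m m 𝕜} {B C : Matrix n n 𝕜}
    (hA : A.PosSemidef) (h : B ≤ C) : A ⊗ₖ B ≤ A ⊗ₖ C := by
  have kronecker_sub : A ⊗ₖ (C - B) = A ⊗ₖ C - A ⊗ₖ B := map_sub (kroneckerBilinear (R := 𝕜) A) C B
  rw [le_iff] at h ⊢
  exact kronecker_sub ▸ hA.kronecker h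

theorem sum_mul_mul_conjTranspose_le [Finite m] [Fintype n] [Fintype ι] (K : ι → Matrix m n 𝕜)
    {X : Matrix n n 𝕜} (hX : X.PosSemidef) :
    (∑ i, K i) * X * (∑ i, K i)ᴴ ≤ (Fintype.card ι : ℝ) • ∑ i, K i * X * (K i)ᴴ := by
  have sub_eq_sum : (Fintype.card ι : ℝ) • ∑ i, K i * X * (K i)ᴴ
      - (∑ i, K i) * X * (∑ i, K i)ᴴ =
      (1 / 2 : ℝ) • ∑ i, ∑ j, (K i - K j) * X * (K i - K j)ᴴ := by
    simp only [conjTranspose_sub, conjTranspose_sum, Matrix.sub_mul, Matrix.mul_sub,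
      Finset.sum_sub_distrib, Matrix.sum_mul, Matrix.mul_sum, Finset.sum_const, Finset.card_univ,
      ← Finset.smul_sum]
    rw [Finset.sum_comm (f := fun i j => K i * X * (K j)ᴴ)]
    module
  rw [le_iff, sub_eq_sum]
  exact (posSemidef_sum _ fun i _ => posSemidef_sum _ fun j _ =>
    hX.mul_mul_conjTranspose_same (K i - K j)).smul (by norm_num : (0 : ℝ) ≤ 1 / 2)

theorem iInf_eigenvalues_smul_one_le [Fintype n] [DecidableEq n] {A : Matrix n n 𝕜}
    (hA : A.IsHermitian) : (⨅ i, hA.eigenvalues i) • (1 : Matrix n n 𝕜) ≤ A := by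
  rw [← Algebra.algebraMap_eq_smul_one]
  refine (algebraMap_le_iff_le_spectrum (ha := hA)).mpr fun x hx => ?_
  obtain ⟨i, rfl⟩ := hA.spectrum_real_eq_range_eigenvalues ▸ hx
  exact ciInf_le (Set.finite_range _).bddBelow i

theorem iInf_eigenvalues_pos [Fintype n] [DecidableEq n] [Nonempty n] {A : Matrix n n 𝕜}
    (hA : A.PosDef) : 0 < ⨅ i, hA.1.eigenvalues i := by
  obtain ⟨i, hi⟩ := exists_eq_ciInf_of_finite (f := hA.1.eigenvalues)
  exact hi ▸ hA.eigenvalues_pos i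

theorem iInf_eigenvalues_le_trace [Fintype n] [DecidableEq n] [Nonempty n] {A : Matrix n n 𝕜}
    (hA : A.PosSemidef) : ⨅ i, hA.1.eigenvalues i ≤ RCLike.re A.trace := by
  obtain ⟨i⟩ := ‹Nonempty n›
  calc ⨅ i, hA.1.eigenvalues i ≤ hA.1.eigenvalues i := ciInf_le (Set.finite_range _).bddBelow i
    _ ≤ ∑ j, hA.1.eigenvalues j :=
      Finset.single_le_sum (fun j _ => hA.eigenvalues_nonneg j) (Finset.mem_univ i)
    _ = RCLike.re A.trace := by simp [hA.1.trace_eq_sum_eigenvalues]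

end LoewnerOrder

section PartialTrace

open scoped Kronecker MatrixOrder

variable {m n R 𝕜 : Type*} [RCLike 𝕜]

/-- The partial trace over the second tensor factor. -/
def partialTraceRight [Fintype n] [AddCommMonoid R] (X : Matrix (m × n) (m × n) R) : Matrix m m R :=
  ∑ i, X.submatrix (·, i) (·, i)

theorem trace_partialTraceRight [Fintype m] [Fintype n] [AddCommMonoid R]
    (X : Matrix (m × n) (m × n) R) : (partialTraceRight X).trace = X.trace := by
  simp [partialTraceRight, trace, Matrix.sum_apply, Fintype.sum_prod_type]

theorem partialTraceRight_posSemidef [Fintype n] {X : Matrix (m × n) (m × n) 𝕜}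
    (hX : X.PosSemidef) : (partialTraceRight X).PosSemidef :=
  posSemidef_sum _ fun _ _ => hX.submatrix _

theorem partialTraceRight_mono [Fintype n] {X Y : Matrix (m × n) (m × n) 𝕜} (h : X ≤ Y) :
    partialTraceRight X ≤ partialTraceRight Y :=
  Finset.sum_le_sum fun i _ => PosSemidef.submatrix (M := Y - X) h (·, i)

theorem one_kronecker_single_mul_mul_conjTranspose [CommSemiring R] [StarRing R] [Fintype m]
    [Fintype n] [DecidableEq m] [DecidableEq n] (X : Matrix (m × n) (m × n) R) (i j : n) :
    (1 ⊗ₖ single i j 1) * X * (1 ⊗ₖ single i j 1 : Matrix (m × n) (m × n) R)ᴴ =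
      X.submatrix (·, j) (·, j) ⊗ₖ single i i 1 := by
  rw [conjTranspose_kronecker, conjTranspose_one, conjTranspose_single, star_one]
  ext ⟨s, a⟩ ⟨t, b⟩
  by_cases ha : i = a <;> by_cases hb : i = b <;>
    simp [mul_apply, Fintype.sum_prod_type, single_apply, one_apply, ite_and, ha, hb]

theorem partialTraceRight_kronecker_one [CommSemiring R] [StarRing R] [Fintype m] [Fintype n]
    [DecidableEq m] [DecidableEq n] (X : Matrix (m × n) (m × n) R) :
    partialTraceRight X ⊗ₖ (1 : Matrix n n R) =
      ∑ i, ∑ j, (1 ⊗ₖ single i j 1) * X * (1 ⊗ₖ single i j 1 : Matrix (m × n) (m × n) R)ᴴ := by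
  calc partialTraceRight X ⊗ₖ (1 : Matrix n n R)
      = ∑ i, ∑ j, X.submatrix (·, j) (·, j) ⊗ₖ single i i (1 : R) := by
        ext ⟨s, a⟩ ⟨t, b⟩
        simp [← sum_single_one, partialTraceRight, Matrix.sum_apply, Finset.mul_sum, Finset.sum_mul]
    _ = _ := by simp only [one_kronecker_single_mul_mul_conjTranspose]

theorem le_card_smul_partialTraceRight_kronecker_one [Finite m] [Fintype n] [DecidableEq n]
    {X : Matrix (m × n) (m × n) 𝕜} (hX : X.PosSemidef) :
    X ≤ (Fintype.card n : ℝ) • (partialTraceRight X ⊗ₖ (1 : Matrix n n 𝕜)) := by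
  classical
  have := Fintype.ofFinite m
  let K (i j : n) : Matrix (m × n) (m × n) 𝕜 := 1 ⊗ₖ single i j 1
  have sum_diag : ∑ i, K i i = 1 := by
    have sum_kronecker : ∑ i, K i i = 1 ⊗ₖ ∑ i, single i i 1 :=
      (map_sum (kroneckerBilinear (R := 𝕜) (1 : Matrix m m 𝕜)) _ _).symm
    rw [sum_kronecker, sum_single_one, one_kronecker_one]
  have summand_nonneg (i j : n) : 0 ≤ K i j * X * (K i j)ᴴ :=
    (hX.mul_mul_conjTranspose_same _).nonneg
  calc X = (∑ i, K i i) * X * (∑ i, K i i)ᴴ := by simp [sum_diag]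
    _ ≤ (Fintype.card n : ℝ) • ∑ i, K i i * X * (K i i)ᴴ := sum_mul_mul_conjTranspose_le _ hX
    _ ≤ (Fintype.card n : ℝ) • ∑ i, ∑ j, K i j * X * (K i j)ᴴ := by
      gcongr with i
      exact Finset.single_le_sum (fun j _ => summand_nonneg i j) (Finset.mem_univ i)
    _ = _ := by rw [partialTraceRight_kronecker_one]

theorem le_smul_partialTraceRight_kronecker [Finite m] [Fintype n] [DecidableEq n]
    {X : Matrix (m × n) (m × n) 𝕜} (hX : X.PosSemidef) {σ : Matrix n n 𝕜} {c : ℝ} (hc : 0 < c)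
    (hσ : c • 1 ≤ σ) :
    X ≤ ((Fintype.card n : ℝ) / c) • (partialTraceRight X ⊗ₖ σ) := by
  have := Fintype.ofFinite m
  calc X ≤ (Fintype.card n : ℝ) • (partialTraceRight X ⊗ₖ (1 : Matrix n n 𝕜)) :=
        le_card_smul_partialTraceRight_kronecker_one hX
    _ = ((Fintype.card n : ℝ) / c) • (partialTraceRight X ⊗ₖ (c • 1 : Matrix n n 𝕜)) := by
      rw [kronecker_smul, smul_smul, div_mul_cancel₀ _ hc.ne']
    _ ≤ ((Fintype.card n : ℝ) / c) • (partialTraceRight X ⊗ₖ σ) := by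
      gcongr
      exact kronecker_le_kronecker_right (partialTraceRight_posSemidef hX) hσ

end PartialTrace

section Ampliation

open scoped Kronecker MatrixOrder

variable {ι α β R : Type*} [CommSemiring R]

/-- The ampliation `id ⊗ L` of a linear map between matrix algebras: `L` applied to each block. -/
def ampliation (ι : Type*) (L : Matrix α α R →ₗ[R] Matrix β β R) :
    Matrix (ι × α) (ι × α) R →ₗ[R] Matrix (ι × β) (ι × β) R :=
  (compLinearEquiv ι ι β β R R).toLinearMap ∘ₗ L.mapMatrix ∘ₗ
    (compLinearEquiv ι ι α α R R).symm.toLinearMap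

theorem comp_symm_ampliation (L : Matrix α α R →ₗ[R] Matrix β β R) (X : Matrix (ι × α) (ι × α) R)
    (s t : ι) :
    (comp ι ι β β R).symm (ampliation ι L X) s t = L ((comp ι ι α α R).symm X s t) := rfl

theorem trace_ampliation [Fintype ι] [Fintype α] [Fintype β]
    {L : Matrix α α R →ₗ[R] Matrix β β R} (hL : ∀ x, (L x).trace = x.trace)
    (X : Matrix (ι × α) (ι × α) R) : (ampliation ι L X).trace = X.trace := by
  simp only [trace, Fintype.sum_prod_type]
  exact Finset.sum_congr rfl fun s _ => hL ((comp ι ι α α R).symm X s s)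

theorem trace_conjTranspose_mul_eq_sum_blocks [StarRing R] [Fintype ι] [Fintype α]
    (X Y : Matrix (ι × α) (ι × α) R) :
    (Xᴴ * Y).trace =
      ∑ s, ∑ t, (((comp ι ι α α R).symm X t s)ᴴ * (comp ι ι α α R).symm Y t s).trace := by
  simp only [trace, diag_apply, mul_apply, Fintype.sum_prod_type, conjTranspose_apply,
    comp_symm_apply]
  exact Finset.sum_congr rfl fun s _ => Finset.sum_comm

theorem trace_conjTranspose_ampliation_mul [StarRing R] [Fintype ι] [Fintype α] [Fintype β]
    {L : Matrix α α R →ₗ[R] Matrix β β R} {Ladj : Matrix β β R →ₗ[R] Matrix α α R}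
    (hadj : ∀ A x, ((L A)ᴴ * x).trace = (Aᴴ * Ladj x).trace)
    (A : Matrix (ι × α) (ι × α) R) (X : Matrix (ι × β) (ι × β) R) :
    ((ampliation ι L A)ᴴ * X).trace = (Aᴴ * ampliation ι Ladj X).trace := by
  simp only [trace_conjTranspose_mul_eq_sum_blocks, comp_symm_ampliation, hadj]

/-- Complete positivity of a linear map between matrix algebras: all its ampliations by finite
matrix algebras preserve positive semidefiniteness. -/
def IsCompletelyPositive (L : Matrix α α ℂ →ₗ[ℂ] Matrix β β ℂ) : Prop :=
  ∀ (k : ℕ) (X : Matrix (Fin k × α) (Fin k × α) ℂ), X.PosSemidef →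
    (ampliation (Fin k) L X).PosSemidef

theorem IsCompletelyPositive.ampliation_posSemidef [Finite ι]
    {L : Matrix α α ℂ →ₗ[ℂ] Matrix β β ℂ} (hL : IsCompletelyPositive L)
    {X : Matrix (ι × α) (ι × α) ℂ} (hX : X.PosSemidef) : (ampliation ι L X).PosSemidef := by
  obtain ⟨k, ⟨e⟩⟩ := Finite.exists_equiv_fin ι
  have relabel : ampliation ι L X =
      (ampliation (Fin k) L (X.submatrix (Prod.map e.symm id) (Prod.map e.symm id))).submatrix
        (Prod.map e id) (Prod.map e id) := by
    ext ⟨s, i⟩ ⟨t, j⟩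
    have block_eq : (comp ι ι α α ℂ).symm X s t = (comp (Fin k) (Fin k) α α ℂ).symm
        (X.submatrix (Prod.map e.symm id) (Prod.map e.symm id)) (e s) (e t) := by
      ext u v
      simp [comp_symm_apply]
    exact congrFun₂ (congrArg L block_eq) i j
  exact relabel ▸ (hL k _ (hX.submatrix _)).submatrix _

theorem IsCompletelyPositive.adjoint [Fintype α] [Fintype β]
    {L : Matrix α α ℂ →ₗ[ℂ] Matrix β β ℂ} {Ladj : Matrix β β ℂ →ₗ[ℂ] Matrix α α ℂ}
    (hL : IsCompletelyPositive L)
    (hadj : ∀ A x, ((L A)ᴴ * x).trace = (Aᴴ * Ladj x).trace) : IsCompletelyPositive Ladj := by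
  intro k X hX
  refine posSemidef_iff_forall_trace_mul_nonneg.mpr fun A hA => ?_
  rw [← hA.isHermitian, ← trace_conjTranspose_ampliation_mul hadj, (hL k A hA).isHermitian]
  exact trace_mul_nonneg_of_posSemidef (hL k A hA) hX

theorem IsCPmap.isCompletelyPositive {d b : ℕ}
    {E : Matrix (Fin d × Fin b) (Fin d × Fin b) ℂ →ₗ[ℂ] Matrix (Fin b) (Fin b) ℂ}
    (hE : IsCPmap d b E) : IsCompletelyPositive E := by
  rintro (_ | k) X hX
  · exact Subsingleton.elim 0 (ampliation (Fin 0) E X) ▸ PosSemidef.zero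
  · exact hE (k + 1) k.succ_pos X hX

theorem trace_apply_of_adjoint_unital [StarRing R] [Fintype α] [Fintype β] [DecidableEq α]
    [DecidableEq β] {L : Matrix α α R →ₗ[R] Matrix β β R}
    {Ladj : Matrix β β R →ₗ[R] Matrix α α R} (hL : L 1 = 1)
    (hadj : ∀ A x, ((L A)ᴴ * x).trace = (Aᴴ * Ladj x).trace) (x : Matrix β β R) :
    (Ladj x).trace = x.trace := by
  simpa [hL] using (hadj 1 x).symm

end Ampliation

section Chain

open scoped Kronecker MatrixOrder

variable {α β R : Type*} [CommSemiring R] {k m n : ℕ}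

/-- Regroups the index set of `n + 1` sites and an auxiliary system `β`, moving the last site next
to `β`, where `ampliation` creates it. -/
def lastSiteEquiv (α β : Type*) (n : ℕ) : (Fin (n + 1) → α) × β ≃ (Fin n → α) × (α × β) :=
  (((Fin.snocEquiv fun _ => α).symm.trans (Equiv.prodComm _ _)).prodCongr (Equiv.refl β)).trans
    (Equiv.prodAssoc _ _ _)

/-- One step `id ⊗ L` of the recursion for `φ̂_n`, the `α`-factor created by `L` becoming the last
site. -/
def appendSite (L : Matrix β β R →ₗ[R] Matrix (α × β) (α × β) R) (n : ℕ) :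
    Matrix ((Fin n → α) × β) ((Fin n → α) × β) R →ₗ[R]
      Matrix ((Fin (n + 1) → α) × β) ((Fin (n + 1) → α) × β) R :=
  (reindexLinearEquiv R R (lastSiteEquiv α β n).symm (lastSiteEquiv α β n).symm).toLinearMap ∘ₗ
    ampliation (Fin n → α) L

theorem trace_appendSite [Fintype α] [Fintype β]
    {L : Matrix β β R →ₗ[R] Matrix (α × β) (α × β) R} (hL : ∀ x, (L x).trace = x.trace)
    (X : Matrix ((Fin n → α) × β) ((Fin n → α) × β) R) : (appendSite L n X).trace = X.trace := by
  rw [← trace_ampliation hL X]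
  exact (lastSiteEquiv α β n).sum_comp fun p => ampliation _ L X p p

theorem appendSite_posSemidef [Finite α] {L : Matrix β β ℂ →ₗ[ℂ] Matrix (α × β) (α × β) ℂ}
    (hL : IsCompletelyPositive L) {X : Matrix ((Fin n → α) × β) ((Fin n → α) × β) ℂ}
    (hX : X.PosSemidef) : (appendSite L n X).PosSemidef :=
  (hL.ampliation_posSemidef hX).submatrix _

theorem appendSite_mono [Finite α] {L : Matrix β β ℂ →ₗ[ℂ] Matrix (α × β) (α × β) ℂ}
    (hL : IsCompletelyPositive L) : Monotone (appendSite L n) := fun X Y h => by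
  rw [le_iff, ← map_sub]
  exact appendSite_posSemidef hL h

/-- Cuts a configuration of `n = k + m` sites into its first `k` and its last `m` sites. -/
def splitSites (h : k + m = n) (x : Fin n → α) : (Fin k → α) × (Fin m → α) :=
  (fun i => x ⟨i, by omega⟩, fun j => x ⟨k + j, by omega⟩)

/-- `A ⊗ B` for `A` on the first `k` sites and `B` on the next `m` sites and the auxiliary
system `β`. -/
def chainKronecker (A : Matrix (Fin k → α) (Fin k → α) R)
    (B : Matrix ((Fin m → α) × β) ((Fin m → α) × β) R) :
    Matrix ((Fin (k + m) → α) × β) ((Fin (k + m) → α) × β) R :=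
  reindex (Equiv.prodAssoc _ _ _).symm (Equiv.prodAssoc _ _ _).symm (A ⊗ₖ B) |>.submatrix
    (Prod.map (splitSites rfl) id) (Prod.map (splitSites rfl) id)

theorem appendSite_chainKronecker (L : Matrix β β R →ₗ[R] Matrix (α × β) (α × β) R)
    (A : Matrix (Fin k → α) (Fin k → α) R) (B : Matrix ((Fin m → α) × β) ((Fin m → α) × β) R) :
    appendSite L (k + m) (chainKronecker A B) = chainKronecker A (appendSite L m B) := by
  ext ⟨x, i⟩ ⟨y, j⟩
  exact congrFun₂ (map_smul L
    (A (fun l => x ⟨l, by omega⟩) (fun l => y ⟨l, by omega⟩))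
    ((comp _ _ β β R).symm B (fun l => x ⟨k + l, by omega⟩) (fun l => y ⟨k + l, by omega⟩)))
    (x (Fin.last _), i) (y (Fin.last _), j)

theorem partialTraceRight_chainKronecker [Fintype β] (A : Matrix (Fin k → α) (Fin k → α) R)
    (B : Matrix ((Fin m → α) × β) ((Fin m → α) × β) R) :
    partialTraceRight (chainKronecker A B) =
      (A ⊗ₖ partialTraceRight B).submatrix (splitSites rfl) (splitSites rfl) := by
  ext x y
  simp [partialTraceRight, chainKronecker, Matrix.sum_apply, Finset.mul_sum]

end Chain

section FinitelyCorrelated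

open scoped Kronecker MatrixOrder

variable {d b : ℕ} {L : Matrix (Fin b) (Fin b) ℂ →ₗ[ℂ] Matrix (Fin d × Fin b) (Fin d × Fin b) ℂ}
  {ρ : Matrix (Fin b) (Fin b) ℂ}

theorem fcPhi_succ (n : ℕ) : fcPhi L ρ (n + 1) = appendSite L n (fcPhi L ρ n) := rfl

theorem fcOmega_eq_partialTraceRight (n : ℕ) :
    fcOmega L ρ n = partialTraceRight (fcPhi L ρ n) := by
  ext x y
  simp [fcOmega, partialTraceRight, Matrix.sum_apply]

theorem fcPhi_posSemidef (hL : IsCompletelyPositive L) (hρ : ρ.PosSemidef) (n : ℕ) :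
    (fcPhi L ρ n).PosSemidef := by
  induction n with
  | zero => exact hρ.submatrix Prod.snd
  | succ n ih => exact appendSite_posSemidef hL ih

theorem fcOmega_posSemidef (hL : IsCompletelyPositive L) (hρ : ρ.PosSemidef) (n : ℕ) :
    (fcOmega L ρ n).PosSemidef := by
  rw [fcOmega_eq_partialTraceRight]
  exact partialTraceRight_posSemidef (fcPhi_posSemidef hL hρ n)

theorem trace_fcOmega (hL : ∀ x, (L x).trace = x.trace) (n : ℕ) :
    (fcOmega L ρ n).trace = ρ.trace := by
  rw [fcOmega_eq_partialTraceRight, trace_partialTraceRight]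
  induction n with
  | zero => simp [fcPhi, trace, Fintype.sum_prod_type]
  | succ n ih => rw [fcPhi_succ, trace_appendSite hL, ih]

theorem fcPhi_add_le_chainKronecker (hL : IsCompletelyPositive L) {k : ℕ}
    {A : Matrix (Fin k → Fin d) (Fin k → Fin d) ℂ} (h : fcPhi L ρ k ≤ A ⊗ₖ ρ) (m : ℕ) :
    fcPhi L ρ (k + m) ≤ chainKronecker A (fcPhi L ρ m) := by
  induction m with
  | zero => exact h
  | succ m ih =>
    calc fcPhi L ρ (k + (m + 1)) = appendSite L (k + m) (fcPhi L ρ (k + m)) := rfl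
      _ ≤ appendSite L (k + m) (chainKronecker A (fcPhi L ρ m)) := appendSite_mono hL ih
      _ = chainKronecker A (fcPhi L ρ (m + 1)) := appendSite_chainKronecker L A _

theorem fcOmega_le_kronecker (hL : IsCompletelyPositive L) {k m n : ℕ} (hn : k + m = n)
    {A : Matrix (Fin k → Fin d) (Fin k → Fin d) ℂ} (h : fcPhi L ρ k ≤ A ⊗ₖ ρ) :
    fcOmega L ρ n ≤ (A ⊗ₖ fcOmega L ρ m).submatrix (splitSites hn) (splitSites hn) := by
  subst hn
  simp only [fcOmega_eq_partialTraceRight, ← partialTraceRight_chainKronecker]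
  exact partialTraceRight_mono (fcPhi_add_le_chainKronecker hL h m)

theorem fcOmega_le_smul_tkron (hL : IsCompletelyPositive L) (hρ : ρ.PosSemidef) {c : ℝ}
    (hc : 0 < c) (hcρ : c • 1 ≤ ρ) {k n : ℕ} (hkn : k ≤ n) :
    fcOmega L ρ n ≤ ((b : ℝ) / c) • tkron hkn (fcOmega L ρ k) (fcOmega L ρ (n - k)) := by
  have hφ : fcPhi L ρ k ≤ (((b : ℝ) / c) • fcOmega L ρ k) ⊗ₖ ρ := by
    have := le_smul_partialTraceRight_kronecker (fcPhi_posSemidef hL hρ k) hc hcρ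
    rwa [Fintype.card_fin, ← fcOmega_eq_partialTraceRight, ← smul_kronecker] at this
  have := fcOmega_le_kronecker hL (Nat.add_sub_of_le hkn) hφ
  rwa [smul_kronecker, submatrix_smul] at this

end FinitelyCorrelated

theorem fcs_density_and_upper_factorization_general {d b : ℕ}
    {L : Matrix (Fin b) (Fin b) ℂ →ₗ[ℂ] Matrix (Fin d × Fin b) (Fin d × Fin b) ℂ}
    (hL : IsCompletelyPositive L) (htr : ∀ x, (L x).trace = x.trace)
    {ρ : Matrix (Fin b) (Fin b) ℂ} (hρ : ρ.PosDef) (hρtr : ρ.trace = 1) :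
    (∀ n, (fcOmega L ρ n).PosSemidef ∧ (fcOmega L ρ n).trace = 1) ∧
    1 ≤ b / ⨅ i, hρ.1.eigenvalues i ∧
      ∀ (n k : ℕ) (hkn : k ≤ n),
        ((b / ⨅ i, hρ.1.eigenvalues i) • tkron hkn (fcOmega L ρ k) (fcOmega L ρ (n - k))
            - fcOmega L ρ n).PosSemidef := by
  have : NeZero b := ⟨by rintro rfl; simp [trace] at hρtr⟩
  have min_pos := iInf_eigenvalues_pos hρ
  have min_le_one : ⨅ i, hρ.1.eigenvalues i ≤ 1 := by
    simpa [hρtr] using iInf_eigenvalues_le_trace hρ.posSemidef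
  have one_le_b : (1 : ℝ) ≤ b := Nat.one_le_cast.mpr NeZero.one_le
  exact ⟨fun n => ⟨fcOmega_posSemidef hL hρ.posSemidef n, (trace_fcOmega htr n).trans hρtr⟩,
    (one_le_div min_pos).mpr (min_le_one.trans one_le_b),
    fun n k hkn =>
      fcOmega_le_smul_tkron hL hρ.posSemidef min_pos (iInf_eigenvalues_smul_one_le hρ.1) hkn⟩

/-- The local restrictions `ω̂_n` of a finitely correlated state are
density matrices and satisfy the upper factorization property
`ω̂_n ≤ β·(ω̂_k ⊗ ω̂_{n-k})` for some `β ≥ 1`. -/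
theorem fcs_density_and_upper_factorization
    (d b : ℕ)
    (E : Matrix (Fin d × Fin b) (Fin d × Fin b) ℂ →ₗ[ℂ] Matrix (Fin b) (Fin b) ℂ)
    (hE1 : E 1 = 1) (hECP : IsCPmap d b E)
    (Estar : Matrix (Fin b) (Fin b) ℂ →ₗ[ℂ] Matrix (Fin d × Fin b) (Fin d × Fin b) ℂ)
    (hadj : ∀ (A : Matrix (Fin d × Fin b) (Fin d × Fin b) ℂ) (x : Matrix (Fin b) (Fin b) ℂ),
      ((E A)ᴴ * x).trace = (Aᴴ * Estar x).trace)
    (ρ : Matrix (Fin b) (Fin b) ℂ) (hρ : ρ.PosDef) (hρtr : ρ.trace = 1)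
    (hinv : (Matrix.of fun i j : Fin b => ∑ a : Fin d, Estar ρ (a, i) (a, j)) = ρ) :
    (∀ n, 1 ≤ n →
      (fcOmega Estar ρ n).PosSemidef ∧ (fcOmega Estar ρ n).trace = 1) ∧
    ∃ β : ℝ, 1 ≤ β ∧
      ∀ (n k : ℕ) (_ : 0 < k) (hkn : k < n),
        (β • tkron hkn.le (fcOmega Estar ρ k) (fcOmega Estar ρ (n - k))
            - fcOmega Estar ρ n).PosSemidef := by
  obtain ⟨hdensity, hβ, hle⟩ := fcs_density_and_upper_factorization_general
    (hECP.isCompletelyPositive.adjoint hadj) (trace_apply_of_adjoint_unital hE1 hadj) hρ hρtr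
  exact ⟨fun n _ => hdensity n, _, hβ, fun n k _ hkn => hle n k hkn.le⟩
end

section
/- Let (ω̂_n)_{n≥1} and (σ̂_n)_{n≥1} be sequences of density matrices, with ω̂_n and σ̂_n on (ℂ^d)^{⊗n}, both satisfying the upper factorization property with a common constant β ≥ 1. Then for every t ∈ [0,1] the sequence (1/n)·log Tr(ω̂_n^{1−t}·σ̂_n^{t}) converges in the extended reals to a limit C(t) ∈ [−∞, ∞) (i.e., its limsup equals its liminf), and moreover limsup_{n→∞} (1/n)·log P_min(ω̂_n, σ̂_n) ≤ inf_{t∈[0,1]} C(t). -/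
open Matrix Filter
open scoped ComplexOrder Classical

/-- A sequence of states on `(ℂ^d)^{⊗n}` satisfies the *upper factorization property*
with constant `β` if `ω_n ≤ β·(ω_k ⊗ ω_{n-k})` in the Loewner order for all `0 < k < n`. -/
def UpperFact {d : ℕ} (ω : (n : ℕ) → Matrix (Fin n → Fin d) (Fin n → Fin d) ℂ)
    (β : ℝ) : Prop :=
  ∀ (n k : ℕ) (_ : 0 < k) (hkn : k < n),
    (β • tkron hkn.le (ω k) (ω (n - k)) - ω n).PosSemidef

/-- A sequence of states on `(ℂ^d)^{⊗n}` satisfies the *lower factorization property*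
with constant `α` if `ω_n ≥ α·(ω_k ⊗ ω_{n-k})` in the Loewner order for all `0 < k < n`. -/
def LowerFact {d : ℕ} (ω : (n : ℕ) → Matrix (Fin n → Fin d) (Fin n → Fin d) ℂ)
    (α : ℝ) : Prop :=
  ∀ (n k : ℕ) (_ : 0 < k) (hkn : k < n),
    (ω n - α • tkron hkn.le (ω k) (ω (n - k)) ).PosSemidef

/-- The power `A^t` of a positive semidefinite matrix by the functional calculus, with the
convention that `A^0` is the support projection of `A` (and, more generally, the power is
taken only on the support).  Junk value `0` if `A` is not Hermitian. -/
noncomputable def mpow {I : Type*} [Fintype I] [DecidableEq I] (A : Matrix I I ℂ)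
    (t : ℝ) : Matrix I I ℂ :=
  if hA : A.IsHermitian then
    (hA.eigenvectorUnitary : Matrix I I ℂ) *
      Matrix.diagonal (fun i =>
        if hA.eigenvalues i = 0 then (0 : ℂ) else ((hA.eigenvalues i ^ t : ℝ) : ℂ)) *
      star (hA.eigenvectorUnitary : Matrix I I ℂ)
  else 0

/-- The minimal Bayesian error probability (with uniform prior) for discriminating the
states `ω` and `σ` by a binary test `0 ≤ A ≤ I`. -/
noncomputable def Pmin {I : Type*} [Fintype I] [DecidableEq I]
    (ω σ : Matrix I I ℂ) : ℝ :=
  sInf {v : ℝ | ∃ A : Matrix I I ℂ, A.PosSemidef ∧ (1 - A).PosSemidef ∧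
    v = ((1 / 2 : ℂ) * (ω * (1 - A)).trace + (1 / 2 : ℂ) * (σ * A).trace).re}

/-- Extended-real-valued logarithm, with `log x = -∞` for `x ≤ 0`. -/
noncomputable def elog (x : ℝ) : EReal :=
  if x ≤ 0 then ⊥ else ((Real.log x : ℝ) : EReal)

/-- The normalized logarithmic quasi-entropy sequence
`n ↦ (1/n)·log Tr(ω_n^{1-t}·σ_n^{t})`, valued in the extended reals. -/
noncomputable def chSeq {d : ℕ}
    (ω σ : (n : ℕ) → Matrix (Fin n → Fin d) (Fin n → Fin d) ℂ) (t : ℝ) (n : ℕ) : EReal :=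
  ((1 / (n : ℝ) : ℝ) : EReal) * elog (((mpow (ω n) (1 - t) * mpow (σ n) t).trace).re)

/-!
The quasi-entropy `Q_t(A, B) = Tr A^{1-t} B^t` with `t ∈ [0, 1]` is monotone in both arguments,
since `x ↦ x^t` is operator monotone; it is homogeneous and multiplicative under tensor products.
Upper factorization therefore makes `n ↦ Q_t(ω_n, σ_n)` submultiplicative up to a constant, and
the Fekete lemma in the extended reals yields `C(t)`.

The bound on the error probability is one-shot, `P_min(A, B) ≤ Q_t(A, B) / 2`, the inequality of
Audenaert et al. Testing with the spectral projection of `A - B` onto the positive half-line, it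
says `Tr A - Q_t(A, B) ≤ Tr (A - B)⁺`. Following Ozawa, this comes from `A ≤ C` and `B ≤ C` for
`C = B + (A - B)⁺`: by operator monotonicity, replacing `A` by `C` only increases
`Tr A^{1-t} (A^t - B^t)`, and `Q_t(C, B) ≥ Q_t(B, B) = Tr B`.
-/

section Fekete

lemma eventually_ereal_div_lt_of_subadditive {u : ℕ → EReal}
    (htop : ∀ n, n ≠ 0 → u n ≠ ⊤) (hadd : ∀ m n, m ≠ 0 → n ≠ 0 → u (m + n) ≤ u m + u n)
    {n : ℕ} (hn : n ≠ 0) {L : EReal} (hL : u n / n < L) :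
    ∀ᶠ p : ℕ in atTop, u p / p < L := by
  by_cases hbot : ∃ m, m ≠ 0 ∧ u m = ⊥
  · obtain ⟨m, hm, hum⟩ := hbot
    filter_upwards [eventually_gt_atTop m] with p hp
    have hup : u p = ⊥ := by
      have h := hadd m (p - m) hm (by lia)
      rwa [Nat.add_sub_of_le hp.le, hum, EReal.bot_add, le_bot_iff] at h
    rw [hup, EReal.bot_div_of_pos_ne_top (by exact_mod_cast hp.pos) (EReal.natCast_ne_top p)]
    exact bot_lt_of_lt hL
  · push Not at hbot
    let v : ℕ → ℝ := fun n => if n = 0 then 0 else (u n).toReal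
    have coe_v {m : ℕ} (hm : m ≠ 0) : (v m : EReal) = u m := by
      simp only [v, if_neg hm]
      exact EReal.coe_toReal (htop m hm) (hbot m hm)
    have coe_v_div {m : ℕ} (hm : m ≠ 0) : ((v m / m : ℝ) : EReal) = u m / m := by
      rw [EReal.coe_div, coe_v hm, EReal.coe_natCast]
    have hv : Subadditive v := by
      intro m n
      rcases eq_or_ne m 0 with rfl | hm
      · simp [v]
      rcases eq_or_ne n 0 with rfl | hn
      · simp [v]
      rw [← EReal.coe_le_coe_iff, EReal.coe_add, coe_v hm, coe_v hn, coe_v (by lia)]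
      exact hadd m n hm hn
    obtain ⟨x, hux, hxL⟩ := EReal.lt_iff_exists_real_btwn.1 hL
    rw [← coe_v_div hn, EReal.coe_lt_coe_iff] at hux
    filter_upwards [hv.eventually_div_lt_of_div_lt hn hux, eventually_ne_atTop 0] with p hp hp0
    rw [← coe_v_div hp0]
    exact (EReal.coe_lt_coe_iff.2 hp).trans hxL

theorem tendsto_ereal_div_of_subadditive {u : ℕ → EReal}
    (htop : ∀ n, n ≠ 0 → u n ≠ ⊤) (hadd : ∀ m n, m ≠ 0 → n ≠ 0 → u (m + n) ≤ u m + u n) :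
    Tendsto (fun n => u n / n) atTop (nhds (⨅ n : ℕ, ⨅ _ : n ≠ 0, u n / n)) := by
  refine tendsto_order.2 ⟨fun L hL => ?_, fun L hL => ?_⟩
  · filter_upwards [eventually_ne_atTop 0] with n hn
    exact hL.trans_le (iInf₂_le n hn)
  · obtain ⟨n, hn, hnL⟩ : ∃ n : ℕ, ∃ _ : n ≠ 0, u n / n < L := by
      simpa only [iInf_lt_iff] using hL
    exact eventually_ereal_div_lt_of_subadditive htop hadd hn hnL

lemma elog_eq_log_ofReal (x : ℝ) : elog x = ENNReal.log (ENNReal.ofReal x) :=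
  (ENNReal.log_ofReal x).symm

lemma elog_mono : Monotone elog := by
  intro x y hxy
  simp only [elog_eq_log_ofReal]
  exact ENNReal.log_monotone (ENNReal.ofReal_le_ofReal hxy)

lemma elog_mul {x : ℝ} (hx : 0 ≤ x) (y : ℝ) : elog (x * y) = elog x + elog y := by
  simp only [elog_eq_log_ofReal, ENNReal.ofReal_mul hx, ENNReal.log_mul_add]

lemma elog_ne_top (x : ℝ) : elog x ≠ ⊤ := by
  unfold elog; split_ifs <;> simp

lemma elog_of_pos {x : ℝ} (hx : 0 < x) : elog x = Real.log x :=
  if_neg hx.not_ge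

lemma one_div_mul_elog_mono (n : ℕ) : Monotone fun x => ((1 / (n : ℝ) : ℝ) : EReal) * elog x :=
  fun _ _ hxy => mul_le_mul_of_nonneg_left (elog_mono hxy) (by exact_mod_cast by positivity)

lemma one_div_mul_elog_eq {c : ℝ} (hc : 0 < c) (x : ℝ) (n : ℕ) :
    ((1 / (n : ℝ) : ℝ) : EReal) * elog x =
      ((-Real.log c / n : ℝ) : EReal) + elog (c * x) / n := by
  have hn : (0 : EReal) ≤ ((1 / n : ℝ) : EReal) := by exact_mod_cast by positivity
  have hdiv : elog (c * x) / n = ((1 / n : ℝ) : EReal) * elog (c * x) := by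
    rw [EReal.div_eq_inv_mul, one_div, EReal.coe_inv, EReal.coe_natCast]
  have hcancel : ((-Real.log c : ℝ) : EReal) + (Real.log c + elog x) = elog x := by
    rw [← add_assoc, ← EReal.coe_add, neg_add_cancel, EReal.coe_zero, zero_add]
  rw [hdiv, elog_mul hc.le, elog_of_pos hc, ← one_div_mul_eq_div _ (-Real.log c), EReal.coe_mul,
    ← EReal.left_distrib_of_nonneg_of_ne_top hn (EReal.coe_ne_top _), hcancel]

theorem exists_tendsto_elog_div_of_submultiplicative {q : ℕ → ℝ} {c : ℝ} (hc : 0 < c)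
    (hq : ∀ n, n ≠ 0 → 0 ≤ q n)
    (hmul : ∀ m n, m ≠ 0 → n ≠ 0 → q (m + n) ≤ c * (q m * q n)) :
    ∃ C : EReal, C ≠ ⊤ ∧
      Tendsto (fun n : ℕ => ((1 / (n : ℝ) : ℝ) : EReal) * elog (q n)) atTop (nhds C) := by
  have hadd (m n : ℕ) (hm : m ≠ 0) (hn : n ≠ 0) :
      elog (c * q (m + n)) ≤ elog (c * q m) + elog (c * q n) := by
    rw [← elog_mul (mul_nonneg hc.le (hq m hm))]
    refine elog_mono ?_
    calc c * q (m + n) ≤ c * (c * (q m * q n)) := by gcongr; exact hmul m n hm hn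
      _ = c * q m * (c * q n) := by ring
  have hfekete := tendsto_ereal_div_of_subadditive (fun n _ => elog_ne_top (c * q n)) hadd
  set C : EReal := ⨅ n : ℕ, ⨅ _ : n ≠ 0, elog (c * q n) / n
  have hC : C ≠ ⊤ := by
    refine ne_top_of_le_ne_top (elog_ne_top (c * q 1)) ?_
    simpa using iInf₂_le (f := fun (n : ℕ) (_ : n ≠ 0) => elog (c * q n) / n) 1 one_ne_zero
  have hconst : Tendsto (fun n : ℕ => ((-Real.log c / n : ℝ) : EReal)) atTop (nhds 0) :=
    EReal.tendsto_coe.2 (tendsto_const_div_atTop_nhds_zero_nat _)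
  have hsum := (EReal.continuousAt_add (p := (0, C)) (by simp) (by simp)).tendsto.comp
    (hconst.prodMk_nhds hfekete)
  simp only [zero_add] at hsum
  exact ⟨C, hC, hsum.congr fun n => (one_div_mul_elog_eq hc (q n) n).symm⟩

end Fekete

section TraceOrder

open scoped MatrixOrder

variable {I 𝕜 : Type*} [Fintype I] [RCLike 𝕜]

lemma trace_mul_nonneg {A B : Matrix I I 𝕜} (hA : 0 ≤ A) (hB : 0 ≤ B) : 0 ≤ (A * B).trace := by
  obtain ⟨S, rfl⟩ := CStarAlgebra.nonneg_iff_eq_star_mul_self.1 hA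
  rw [trace_mul_comm, ← Matrix.mul_assoc, trace_mul_comm, ← Matrix.mul_assoc]
  exact ((nonneg_iff_posSemidef.1 hB).mul_mul_conjTranspose_same S).trace_nonneg

lemma trace_mul_le_trace_mul_left {A B C : Matrix I I 𝕜} (hBC : B ≤ C) (hA : 0 ≤ A) :
    (A * B).trace ≤ (A * C).trace := by
  rw [← sub_nonneg, ← trace_sub, ← mul_sub]
  exact trace_mul_nonneg hA (sub_nonneg.2 hBC)

lemma trace_mul_le_trace_mul_right {A B C : Matrix I I 𝕜} (hBC : B ≤ C) (hA : 0 ≤ A) :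
    (B * A).trace ≤ (C * A).trace := by
  simpa only [trace_mul_comm _ A] using trace_mul_le_trace_mul_left hBC hA

end TraceOrder

section FunctionalCalculus

lemma exists_polynomial_eqOn {F : Type*} [Field F] {S : Set F} (hS : S.Finite) (f : F → F) :
    ∃ p : Polynomial F, Set.EqOn (fun x => p.eval x) f S :=
  ⟨Lagrange.interpolate hS.toFinset id f, fun _ hx =>
    Lagrange.eval_interpolate_at_node f (Set.injOn_id _) (hS.mem_toFinset.2 hx)⟩

lemma cfc_algHom_pi_apply {ι B : Type*} [Finite ι] [TopologicalSpace B] [Ring B] [StarRing B]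
    [Algebra ℝ B] [ContinuousFunctionalCalculus ℝ B IsSelfAdjoint] (φ : (ι → ℝ) →ₐ[ℝ] B)
    {a : ι → ℝ} (ha : IsSelfAdjoint (φ a)) (f : ℝ → ℝ) : cfc f (φ a) = φ (f ∘ a) := by
  have hspec : spectrum ℝ (φ a) ⊆ Set.range a := by
    refine (AlgHom.spectrum_apply_subset φ a).trans ?_
    rw [Pi.spectrum_eq]
    refine Set.iUnion_subset fun i => ?_
    exact (spectrum.scalar_eq (𝕜 := ℝ) (A := ℝ) (a i)).subset.trans (by simp)
  obtain ⟨p, hp⟩ := exists_polynomial_eqOn (Set.finite_range a) f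
  have hpa : Polynomial.aeval a p = f ∘ a := by
    ext i
    simpa using hp ⟨i, rfl⟩
  rw [← cfc_congr (hp.mono hspec), cfc_polynomial p (φ a) ha, Polynomial.aeval_algHom_apply, hpa]

end FunctionalCalculus

section MatrixPowers

open scoped MatrixOrder

variable {I : Type*} [Fintype I] [DecidableEq I]

/-- The real power `x ^ t` taken on the support: it vanishes at `x = 0` even for `t = 0`, where
`Real.rpow` gives `1`. The functional calculus turns it into `mpow`. -/
noncomputable def suppPow (t x : ℝ) : ℝ := if x = 0 then 0 else x ^ t

lemma suppPow_nonneg (t : ℝ) {x : ℝ} (hx : 0 ≤ x) : 0 ≤ suppPow t x := by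
  unfold suppPow
  split_ifs
  · exact le_rfl
  · positivity

lemma suppPow_mul (t : ℝ) {x y : ℝ} (hx : 0 ≤ x) (hy : 0 ≤ y) :
    suppPow t (x * y) = suppPow t x * suppPow t y := by
  unfold suppPow
  by_cases h : x = 0 <;> by_cases h' : y = 0 <;> simp [h, h', Real.mul_rpow hx hy]

lemma suppPow_one_sub_mul_suppPow (t : ℝ) {x : ℝ} (hx : 0 ≤ x) :
    suppPow (1 - t) x * suppPow t x = x := by
  unfold suppPow
  split_ifs with h
  · simp [h]
  · rw [← Real.rpow_add (hx.lt_of_ne' h), sub_add_cancel, Real.rpow_one]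

lemma suppPow_of_base_ne_zero (t : ℝ) {x : ℝ} (hx : x ≠ 0) : suppPow t x = x ^ t := if_neg hx

lemma suppPow_of_ne_zero {t : ℝ} (ht : t ≠ 0) (x : ℝ) : suppPow t x = x ^ t := by
  unfold suppPow
  split_ifs with h
  · rw [h, Real.zero_rpow ht]
  · rfl

lemma mpow_eq_cfc (A : Matrix I I ℂ) (t : ℝ) : mpow A t = cfc (suppPow t) A := by
  unfold mpow
  split_ifs with hA
  · rw [hA.cfc_eq, Matrix.IsHermitian.cfc]
    simp [suppPow, Unitary.conjStarAlgAut_apply, Function.comp_def, apply_ite]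
  · exact (cfc_apply_of_not_predicate A hA).symm

lemma mpow_nonneg {A : Matrix I I ℂ} (hA : 0 ≤ A) (t : ℝ) : 0 ≤ mpow A t := by
  rw [mpow_eq_cfc]
  exact cfc_nonneg fun x hx => suppPow_nonneg t (spectrum_nonneg_of_nonneg hA hx)

lemma mpow_one_sub_mul_mpow {A : Matrix I I ℂ} (hA : 0 ≤ A) (t : ℝ) :
    mpow A (1 - t) * mpow A t = A := by
  have hcont (f : ℝ → ℝ) : ContinuousOn f (spectrum ℝ A) := A.finite_real_spectrum.continuousOn f
  rw [mpow_eq_cfc, mpow_eq_cfc, ← cfc_mul _ _ A (hcont _) (hcont _),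
    cfc_congr fun x hx => suppPow_one_sub_mul_suppPow t (spectrum_nonneg_of_nonneg hA hx),
    cfc_id' ℝ A]

lemma mpow_smul {A : Matrix I I ℂ} (hA : 0 ≤ A) {c : ℝ} (hc : 0 < c) (t : ℝ) :
    mpow (c • A) t = c ^ t • mpow A t := by
  have hsmul : Set.EqOn (fun x => suppPow t (c • x)) (fun x => c ^ t • suppPow t x)
      (spectrum ℝ A) := fun x hx => by
    simp only [smul_eq_mul, suppPow_mul t hc.le (spectrum_nonneg_of_nonneg hA hx),
      suppPow_of_base_ne_zero t hc.ne']
  rw [mpow_eq_cfc, mpow_eq_cfc,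
    ← cfc_comp_smul c _ A ((A.finite_real_spectrum.image _).continuousOn _), cfc_congr hsmul,
    cfc_smul (c ^ t) _ A (A.finite_real_spectrum.continuousOn _)]

lemma continuous_mpow (A : Matrix I I ℂ) : Continuous (mpow A) := by
  unfold mpow
  split_ifs with hA
  · refine (continuous_const.matrix_mul (Continuous.matrix_diagonal ?_)).matrix_mul continuous_const
    refine continuous_pi fun i => ?_
    split_ifs with h
    · exact continuous_const
    · exact Complex.continuous_ofReal.comp (Real.continuous_const_rpow h)
  · exact continuous_const

open scoped Matrix.Norms.L2Operator in
lemma mpow_eq_rpow {A : Matrix I I ℂ} (hA : 0 ≤ A) {t : ℝ} (ht : 0 < t) : mpow A t = A ^ t := by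
  rw [mpow_eq_cfc, CFC.rpow_eq_cfc_real]
  exact cfc_congr fun x _ => suppPow_of_ne_zero ht.ne' x

open scoped Matrix.Norms.L2Operator in
lemma mpow_le_mpow {A B : Matrix I I ℂ} (hA : 0 ≤ A) (hAB : A ≤ B) {t : ℝ}
    (ht : t ∈ Set.Icc (0 : ℝ) 1) : mpow A t ≤ mpow B t := by
  have hpos (s : ℝ) (hs : s ∈ Set.Ioc (0 : ℝ) 1) : mpow A s ≤ mpow B s := by
    rw [mpow_eq_rpow hA hs.1, mpow_eq_rpow (hA.trans hAB) hs.1]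
    exact CFC.rpow_le_rpow (Set.Ioc_subset_Icc_self hs) hAB
  rcases ht.1.eq_or_lt with rfl | h0
  · have hlim (C : Matrix I I ℂ) :
        Tendsto (mpow C) (nhdsWithin 0 (Set.Ioi 0)) (nhds (mpow C 0)) :=
      (continuous_mpow C).continuousAt.tendsto.mono_left nhdsWithin_le_nhds
    refine le_of_tendsto_of_tendsto (hlim A) (hlim B) ?_
    filter_upwards [Ioc_mem_nhdsGT one_pos] with s hs using hpos s hs
  · exact hpos t ⟨h0, ht.2⟩

variable {J : Type*} [Fintype J] [DecidableEq J]

lemma isSelfAdjoint_conj_diagonal (U : unitaryGroup I ℂ) (a : I → ℝ) :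
    IsSelfAdjoint (Unitary.conjStarAlgAut ℂ _ U (diagonal fun i => (a i : ℂ))) := by
  refine IsSelfAdjoint.map ?_ _
  exact isHermitian_diagonal_iff.2 fun i => by simp [IsSelfAdjoint]

lemma cfc_conj_diagonal (U : unitaryGroup I ℂ) (a : I → ℝ) (f : ℝ → ℝ) :
    cfc f (Unitary.conjStarAlgAut ℂ _ U (diagonal fun i => (a i : ℂ))) =
      Unitary.conjStarAlgAut ℂ _ U (diagonal fun i => (f (a i) : ℂ)) := by
  let φ : (I → ℝ) →ₐ[ℝ] Matrix I I ℂ :=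
    ((Unitary.conjStarAlgAut ℂ (Matrix I I ℂ) U).toAlgEquiv.toAlgHom.restrictScalars ℝ).comp
      ((diagonalAlgHom ℝ).comp (Complex.ofRealAm.compLeft I))
  exact cfc_algHom_pi_apply φ (a := a) (isSelfAdjoint_conj_diagonal U a) f

lemma mpow_conj_diagonal (U : unitaryGroup I ℂ) (a : I → ℝ) (t : ℝ) :
    mpow (Unitary.conjStarAlgAut ℂ _ U (diagonal fun i => (a i : ℂ))) t =
      Unitary.conjStarAlgAut ℂ _ U (diagonal fun i => (suppPow t (a i) : ℂ)) := by
  rw [mpow_eq_cfc, cfc_conj_diagonal]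

open scoped Kronecker in
lemma conj_kronecker_conj (U : unitaryGroup I ℂ) (V : unitaryGroup J ℂ) (A : Matrix I I ℂ)
    (B : Matrix J J ℂ) :
    Unitary.conjStarAlgAut ℂ _ U A ⊗ₖ Unitary.conjStarAlgAut ℂ _ V B =
      Unitary.conjStarAlgAut ℂ _
        (⟨U.1 ⊗ₖ V.1, kronecker_mem_unitary U.2 V.2⟩ : unitaryGroup (I × J) ℂ) (A ⊗ₖ B) := by
  simp only [Unitary.conjStarAlgAut_apply, star_eq_conjTranspose, conjTranspose_kronecker,
    mul_kronecker_mul]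

lemma exists_eq_conj_diagonal_of_nonneg {A : Matrix I I ℂ} (hA : 0 ≤ A) :
    ∃ (U : unitaryGroup I ℂ) (a : I → ℝ), 0 ≤ a ∧
      A = Unitary.conjStarAlgAut ℂ _ U (diagonal fun i => (a i : ℂ)) :=
  have hA' := nonneg_iff_posSemidef.1 hA
  ⟨_, _, hA'.eigenvalues_nonneg, hA'.isHermitian.spectral_theorem⟩

open scoped Kronecker in
lemma mpow_kronecker {A : Matrix I I ℂ} {B : Matrix J J ℂ} (hA : 0 ≤ A) (hB : 0 ≤ B) (t : ℝ) :
    mpow (A ⊗ₖ B) t = mpow A t ⊗ₖ mpow B t := by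
  obtain ⟨U, a, ha, rfl⟩ := exists_eq_conj_diagonal_of_nonneg hA
  obtain ⟨V, b, hb, rfl⟩ := exists_eq_conj_diagonal_of_nonneg hB
  simp only [mpow_conj_diagonal, conj_kronecker_conj, diagonal_kronecker_diagonal,
    ← Complex.ofReal_mul, suppPow_mul t (ha _) (hb _)]

lemma mpow_submatrix_equiv (e : J ≃ I) {A : Matrix I I ℂ} (hA : A.IsHermitian) (t : ℝ) :
    mpow (A.submatrix e e) t = (mpow A t).submatrix e e := by
  let φ : Matrix I I ℂ ≃⋆ₐ[ℂ] Matrix J J ℂ :=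
    StarAlgEquiv.ofAlgEquiv (reindexAlgEquiv ℂ ℂ e.symm) fun _ => rfl
  have hφ : Continuous φ := continuous_id.matrix_submatrix e e
  rw [mpow_eq_cfc, mpow_eq_cfc]
  exact (StarAlgHomClass.map_cfc φ (suppPow t) A (A.finite_real_spectrum.continuousOn _) hφ hA
    (hA.submatrix e)).symm

end MatrixPowers

section QuasiEntropy

open scoped MatrixOrder

variable {I J : Type*} [Fintype I] [DecidableEq I] [Fintype J] [DecidableEq J]

/-- The quasi-entropy `Tr A^{1-t} B^t` of the Chernoff bound, with the powers of `mpow`; `chSeq` is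
its normalized logarithm. It is defined as a real part, the trace being real on positive
semidefinite matrices. -/
noncomputable def quasiEntropy (t : ℝ) (A B : Matrix I I ℂ) : ℝ :=
  ((mpow A (1 - t) * mpow B t).trace).re

lemma quasiEntropy_nonneg (t : ℝ) {A B : Matrix I I ℂ} (hA : 0 ≤ A) (hB : 0 ≤ B) :
    0 ≤ quasiEntropy t A B :=
  Complex.re_le_re <| trace_mul_nonneg (mpow_nonneg hA _) (mpow_nonneg hB _)

lemma quasiEntropy_mono {t : ℝ} (ht : t ∈ Set.Icc (0 : ℝ) 1) {A A' B B' : Matrix I I ℂ}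
    (hA : 0 ≤ A) (hAA' : A ≤ A') (hB : 0 ≤ B) (hBB' : B ≤ B') :
    quasiEntropy t A B ≤ quasiEntropy t A' B' :=
  Complex.re_le_re <| calc
    (mpow A (1 - t) * mpow B t).trace ≤ (mpow A' (1 - t) * mpow B t).trace :=
      trace_mul_le_trace_mul_right (mpow_le_mpow hA hAA' (Set.Icc.mem_iff_one_sub_mem.1 ht))
        (mpow_nonneg hB t)
    _ ≤ (mpow A' (1 - t) * mpow B' t).trace :=
      trace_mul_le_trace_mul_left (mpow_le_mpow hB hBB' ht) (mpow_nonneg (hA.trans hAA') _)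

lemma quasiEntropy_smul_smul (t : ℝ) {A B : Matrix I I ℂ} (hA : 0 ≤ A) (hB : 0 ≤ B) {α β : ℝ}
    (hα : 0 < α) (hβ : 0 < β) :
    quasiEntropy t (α • A) (β • B) = α ^ (1 - t) * β ^ t * quasiEntropy t A B := by
  simp only [quasiEntropy, mpow_smul hA hα, mpow_smul hB hβ, smul_mul_smul_comm, trace_smul,
    Complex.smul_re, smul_eq_mul]

open scoped Kronecker in
lemma quasiEntropy_kronecker (t : ℝ) {A₁ B₁ : Matrix I I ℂ} {A₂ B₂ : Matrix J J ℂ}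
    (hA₁ : 0 ≤ A₁) (hA₂ : 0 ≤ A₂) (hB₁ : 0 ≤ B₁) (hB₂ : 0 ≤ B₂) :
    quasiEntropy t (A₁ ⊗ₖ A₂) (B₁ ⊗ₖ B₂) = quasiEntropy t A₁ B₁ * quasiEntropy t A₂ B₂ := by
  have him : ((mpow A₁ (1 - t) * mpow B₁ t).trace).im = 0 :=
    (Complex.le_def.1 (trace_mul_nonneg (mpow_nonneg hA₁ _) (mpow_nonneg hB₁ t))).2.symm
  simp only [quasiEntropy, mpow_kronecker hA₁ hA₂, mpow_kronecker hB₁ hB₂, ← mul_kronecker_mul,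
    trace_kronecker, Complex.mul_re, him, zero_mul, sub_zero]

lemma quasiEntropy_submatrix_equiv (t : ℝ) (e : J ≃ I) {A B : Matrix I I ℂ} (hA : A.IsHermitian)
    (hB : B.IsHermitian) :
    quasiEntropy t (A.submatrix e e) (B.submatrix e e) = quasiEntropy t A B := by
  simp only [quasiEntropy, mpow_submatrix_equiv e hA, mpow_submatrix_equiv e hB,
    submatrix_mul_equiv]
  exact congrArg Complex.re (e.sum_comp fun i => (mpow A (1 - t) * mpow B t) i i)

end QuasiEntropy

section ErrorProbability

open scoped MatrixOrder

variable {I : Type*} [Fintype I] [DecidableEq I]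

lemma trace_sub_trace_mpow_mul_mpow_le {A B P : Matrix I I ℂ} (hA : 0 ≤ A) (hB : 0 ≤ B)
    (hP : 0 ≤ P) (hAP : A ≤ B + P) {t : ℝ} (ht : t ∈ Set.Icc (0 : ℝ) 1) :
    A.trace - (mpow A (1 - t) * mpow B t).trace ≤ P.trace := by
  have hBC : B ≤ B + P := le_add_of_nonneg_right hP
  have hC : 0 ≤ B + P := hB.trans hBC
  have ht' : 1 - t ∈ Set.Icc (0 : ℝ) 1 := Set.Icc.mem_iff_one_sub_mem.1 ht
  calc A.trace - (mpow A (1 - t) * mpow B t).trace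
      = (mpow A (1 - t) * (mpow A t - mpow B t)).trace := by
        rw [mul_sub, mpow_one_sub_mul_mpow hA, trace_sub]
    _ ≤ (mpow A (1 - t) * (mpow (B + P) t - mpow B t)).trace :=
        trace_mul_le_trace_mul_left (sub_le_sub_right (mpow_le_mpow hA hAP ht) _)
          (mpow_nonneg hA _)
    _ ≤ (mpow (B + P) (1 - t) * (mpow (B + P) t - mpow B t)).trace :=
        trace_mul_le_trace_mul_right (mpow_le_mpow hA hAP ht')
          (sub_nonneg.2 (mpow_le_mpow hB hBC ht))
    _ = (B + P).trace - (mpow (B + P) (1 - t) * mpow B t).trace := by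
        rw [mul_sub, mpow_one_sub_mul_mpow hC, trace_sub]
    _ ≤ (B + P).trace - (mpow B (1 - t) * mpow B t).trace :=
        sub_le_sub_left (trace_mul_le_trace_mul_right (mpow_le_mpow hB hBC ht')
          (mpow_nonneg hB t)) _
    _ = P.trace := by rw [mpow_one_sub_mul_mpow hB, trace_add, add_sub_cancel_left]

lemma exists_test_mul_eq_posPart {D : Matrix I I ℂ} (hD : D.IsHermitian) :
    ∃ E : Matrix I I ℂ, 0 ≤ E ∧ E ≤ 1 ∧ D * E = D⁺ := by
  let χ : ℝ → ℝ := fun x => if 0 < x then 1 else 0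
  have hcont (f : ℝ → ℝ) : ContinuousOn f (spectrum ℝ D) := D.finite_real_spectrum.continuousOn f
  have hχ₀ (x : ℝ) : 0 ≤ χ x := ite_nonneg zero_le_one le_rfl
  have hχ₁ (x : ℝ) : χ x ≤ 1 := ite_le_one le_rfl zero_le_one
  have hχ (x : ℝ) : x * χ x = x⁺ := by
    rcases lt_or_ge 0 x with hx | hx
    · simp [χ, hx, hx.le]
    · simp [χ, hx]
  refine ⟨cfc χ D, cfc_nonneg fun x _ => hχ₀ x, cfc_le_one χ D fun x _ => hχ₁ x, ?_⟩
  calc D * cfc χ D = cfc (fun x => x * χ x) D := by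
        rw [cfc_mul _ _ D (hcont _) (hcont _), cfc_id' ℝ D]
    _ = D⁺ := by rw [CFC.posPart_def, cfcₙ_eq_cfc, funext hχ]

lemma Pmin_le_of_test {A B E : Matrix I I ℂ} (hA : 0 ≤ A) (hB : 0 ≤ B) (hE : 0 ≤ E) (hE' : E ≤ 1) :
    Pmin A B ≤ ((1 / 2 : ℂ) * (A * (1 - E)).trace + (1 / 2 : ℂ) * (B * E).trace).re := by
  refine csInf_le ⟨0, ?_⟩ ⟨E, nonneg_iff_posSemidef.1 hE, le_iff.1 hE', rfl⟩
  rintro _ ⟨F, hF, hF', rfl⟩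
  have h1 := trace_mul_nonneg hA (nonneg_iff_posSemidef.2 hF')
  have h2 := trace_mul_nonneg hB (nonneg_iff_posSemidef.2 hF)
  exact Complex.re_le_re (x := 0) (by positivity)

theorem Pmin_le_half_quasiEntropy {A B : Matrix I I ℂ} (hA : 0 ≤ A) (hB : 0 ≤ B) {t : ℝ}
    (ht : t ∈ Set.Icc (0 : ℝ) 1) : Pmin A B ≤ quasiEntropy t A B / 2 := by
  have hD : (A - B).IsHermitian :=
    (nonneg_iff_posSemidef.1 hA).isHermitian.sub (nonneg_iff_posSemidef.1 hB).isHermitian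
  obtain ⟨E, hE, hE', hDE⟩ := exists_test_mul_eq_posPart hD
  have hAP : A ≤ B + (A - B)⁺ := sub_le_iff_le_add'.1 (CFC.le_posPart hD)
  have herror : (A * (1 - E)).trace + (B * E).trace ≤ (mpow A (1 - t) * mpow B t).trace := by
    have h := trace_sub_trace_mpow_mul_mpow_le hA hB (CFC.posPart_nonneg _) hAP ht
    rw [← hDE, sub_mul, trace_sub, sub_le_comm] at h
    rwa [mul_sub, mul_one, trace_sub, sub_add]
  calc Pmin A B ≤ ((1 / 2 : ℂ) * (A * (1 - E)).trace + (1 / 2 : ℂ) * (B * E).trace).re :=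
        Pmin_le_of_test hA hB hE hE'
    _ = ((A * (1 - E)).trace + (B * E).trace).re / 2 := by
        rw [← mul_add, one_div_mul_eq_div, Complex.div_ofNat_re]
    _ ≤ quasiEntropy t A B / 2 := by
        have := Complex.re_le_re herror
        unfold quasiEntropy
        gcongr

end ErrorProbability

section TensorPower

open scoped MatrixOrder Kronecker

variable {d n k : ℕ}

/-- The canonical identification of the index set of `(ℂ^d)^{⊗n}` with that of
`(ℂ^d)^{⊗k} ⊗ (ℂ^d)^{⊗(n-k)}`, under which `tkron` is the Kronecker product. -/
def splitEquiv (d : ℕ) (h : k ≤ n) : (Fin n → Fin d) ≃ (Fin k → Fin d) × (Fin (n - k) → Fin d) :=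
  ((finCongr (Nat.add_sub_of_le h).symm).arrowCongr (Equiv.refl (Fin d))).trans
    (Fin.appendEquiv k (n - k)).symm

lemma tkron_eq_submatrix (h : k ≤ n) (M : Matrix (Fin k → Fin d) (Fin k → Fin d) ℂ)
    (N : Matrix (Fin (n - k) → Fin d) (Fin (n - k) → Fin d) ℂ) :
    tkron h M N = (M ⊗ₖ N).submatrix (splitEquiv d h) (splitEquiv d h) := rfl

variable {A B : Matrix (Fin n → Fin d) (Fin n → Fin d) ℂ}
  {A₁ B₁ : Matrix (Fin k → Fin d) (Fin k → Fin d) ℂ}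
  {A₂ B₂ : Matrix (Fin (n - k) → Fin d) (Fin (n - k) → Fin d) ℂ}

lemma tkron_nonneg (h : k ≤ n) (hA₁ : 0 ≤ A₁) (hA₂ : 0 ≤ A₂) : 0 ≤ tkron h A₁ A₂ := by
  rw [tkron_eq_submatrix]
  rw [nonneg_iff_posSemidef] at *
  exact (hA₁.kronecker hA₂).submatrix _

lemma quasiEntropy_tkron (t : ℝ) (h : k ≤ n) (hA₁ : 0 ≤ A₁) (hA₂ : 0 ≤ A₂) (hB₁ : 0 ≤ B₁)
    (hB₂ : 0 ≤ B₂) :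
    quasiEntropy t (tkron h A₁ A₂) (tkron h B₁ B₂) =
      quasiEntropy t A₁ B₁ * quasiEntropy t A₂ B₂ := by
  rw [← quasiEntropy_kronecker t hA₁ hA₂ hB₁ hB₂, tkron_eq_submatrix, tkron_eq_submatrix]
  rw [nonneg_iff_posSemidef] at *
  exact quasiEntropy_submatrix_equiv t _ (hA₁.kronecker hA₂).isHermitian
    (hB₁.kronecker hB₂).isHermitian

lemma quasiEntropy_le_of_le_smul_tkron {t : ℝ} (ht : t ∈ Set.Icc (0 : ℝ) 1) (h : k ≤ n)
    {α β : ℝ} (hα : 0 < α) (hβ : 0 < β) (hA : 0 ≤ A) (hA₁ : 0 ≤ A₁) (hA₂ : 0 ≤ A₂) (hB : 0 ≤ B)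
    (hB₁ : 0 ≤ B₁) (hB₂ : 0 ≤ B₂) (hAle : A ≤ α • tkron h A₁ A₂) (hBle : B ≤ β • tkron h B₁ B₂) :
    quasiEntropy t A B ≤
      α ^ (1 - t) * β ^ t * (quasiEntropy t A₁ B₁ * quasiEntropy t A₂ B₂) :=
  calc quasiEntropy t A B ≤ quasiEntropy t (α • tkron h A₁ A₂) (β • tkron h B₁ B₂) :=
        quasiEntropy_mono ht hA hAle hB hBle
    _ = α ^ (1 - t) * β ^ t * (quasiEntropy t A₁ B₁ * quasiEntropy t A₂ B₂) := by
        rw [quasiEntropy_smul_smul t (tkron_nonneg h hA₁ hA₂) (tkron_nonneg h hB₁ hB₂) hα hβ,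
          quasiEntropy_tkron t h hA₁ hA₂ hB₁ hB₂]

variable {ω σ : (n : ℕ) → Matrix (Fin n → Fin d) (Fin n → Fin d) ℂ} {α β t : ℝ}

lemma quasiEntropy_add_le_of_upperFact (hα : 0 < α) (hβ : 0 < β)
    (hω : ∀ n, n ≠ 0 → 0 ≤ ω n) (hσ : ∀ n, n ≠ 0 → 0 ≤ σ n) (hωf : UpperFact ω α)
    (hσf : UpperFact σ β) (ht : t ∈ Set.Icc (0 : ℝ) 1) (m n : ℕ) (hm : m ≠ 0) (hn : n ≠ 0) :
    quasiEntropy t (ω (m + n)) (σ (m + n)) ≤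
      α ^ (1 - t) * β ^ t * (quasiEntropy t (ω m) (σ m) * quasiEntropy t (ω n) (σ n)) := by
  have hsplit (τ : (n : ℕ) → Matrix (Fin n → Fin d) (Fin n → Fin d) ℂ) {γ : ℝ}
      (hτf : UpperFact τ γ) : τ (m + n) ≤ γ • tkron (m.le_add_right n) (τ m) (τ (m + n - m)) :=
    le_iff.2 (hτf (m + n) m (by lia) (by lia))
  have h := quasiEntropy_le_of_le_smul_tkron ht (m.le_add_right n) hα hβ
    (hω _ (by lia)) (hω m hm) (hω _ (by lia)) (hσ _ (by lia)) (hσ m hm) (hσ _ (by lia))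
    (hsplit ω hωf) (hsplit σ hσf)
  rwa [Nat.add_sub_cancel_left] at h

theorem exists_tendsto_chSeq (hα : 0 < α) (hβ : 0 < β) (hω : ∀ n, n ≠ 0 → 0 ≤ ω n)
    (hσ : ∀ n, n ≠ 0 → 0 ≤ σ n) (hωf : UpperFact ω α) (hσf : UpperFact σ β)
    (ht : t ∈ Set.Icc (0 : ℝ) 1) :
    ∃ C : EReal, C ≠ ⊤ ∧ Tendsto (chSeq ω σ t) atTop (nhds C) :=
  exists_tendsto_elog_div_of_submultiplicative (q := fun n => quasiEntropy t (ω n) (σ n))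
    (mul_pos (Real.rpow_pos_of_pos hα _) (Real.rpow_pos_of_pos hβ _))
    (fun n hn => quasiEntropy_nonneg t (hω n hn) (hσ n hn))
    (quasiEntropy_add_le_of_upperFact hα hβ hω hσ hωf hσf ht)

theorem limsup_elog_Pmin_le_limsup_chSeq (hω : ∀ n, n ≠ 0 → 0 ≤ ω n) (hσ : ∀ n, n ≠ 0 → 0 ≤ σ n)
    (ht : t ∈ Set.Icc (0 : ℝ) 1) :
    limsup (fun n : ℕ => ((1 / (n : ℝ) : ℝ) : EReal) * elog (Pmin (ω n) (σ n))) atTop ≤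
      limsup (chSeq ω σ t) atTop := by
  refine limsup_le_limsup ?_
  filter_upwards [eventually_ne_atTop 0] with n hn
  refine one_div_mul_elog_mono n ?_
  exact (Pmin_le_half_quasiEntropy (hω n hn) (hσ n hn) ht).trans
    (half_le_self (quasiEntropy_nonneg t (hω n hn) (hσ n hn)))

end TensorPower

theorem chernoff_upper_bound_of_upperFact_general
    {d : ℕ} {ω σ : (n : ℕ) → Matrix (Fin n → Fin d) (Fin n → Fin d) ℂ}
    (hω : ∀ n, 1 ≤ n → (ω n).PosSemidef) (hσ : ∀ n, 1 ≤ n → (σ n).PosSemidef)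
    {α β : ℝ} (hα : 0 < α) (hβ : 0 < β) (hωf : UpperFact ω α) (hσf : UpperFact σ β) :
    (∀ t ∈ Set.Icc (0 : ℝ) 1,
        limsup (chSeq ω σ t) atTop = liminf (chSeq ω σ t) atTop ∧
        limsup (chSeq ω σ t) atTop ≠ (⊤ : EReal)) ∧
    limsup (fun n : ℕ => ((1 / (n : ℝ) : ℝ) : EReal) * elog (Pmin (ω n) (σ n))) atTop ≤
      ⨅ t ∈ Set.Icc (0 : ℝ) 1, limsup (chSeq ω σ t) atTop := by
  have hω₀ (n : ℕ) (hn : n ≠ 0) := nonneg_iff_posSemidef.2 (hω n (Nat.one_le_iff_ne_zero.2 hn))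
  have hσ₀ (n : ℕ) (hn : n ≠ 0) := nonneg_iff_posSemidef.2 (hσ n (Nat.one_le_iff_ne_zero.2 hn))
  refine ⟨fun t ht => ?_, le_iInf₂ fun t ht => limsup_elog_Pmin_le_limsup_chSeq hω₀ hσ₀ ht⟩
  obtain ⟨C, hC, hlim⟩ := exists_tendsto_chSeq hα hβ hω₀ hσ₀ hωf hσf ht
  exact ⟨hlim.limsup_eq.trans hlim.liminf_eq.symm, hlim.limsup_eq.trans_ne hC⟩

/-- Chernoff upper bound under upper factorization. -/
theorem chernoff_upper_bound_of_upperFact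
    (d : ℕ)
    (ω σ : (n : ℕ) → Matrix (Fin n → Fin d) (Fin n → Fin d) ℂ)
    (hω : ∀ n, 1 ≤ n → (ω n).PosSemidef ∧ (ω n).trace = 1)
    (hσ : ∀ n, 1 ≤ n → (σ n).PosSemidef ∧ (σ n).trace = 1)
    (β : ℝ) (hβ : 1 ≤ β)
    (hωf : UpperFact ω β) (hσf : UpperFact σ β) :
    (∀ t ∈ Set.Icc (0 : ℝ) 1,
        limsup (chSeq ω σ t) atTop = liminf (chSeq ω σ t) atTop ∧
        limsup (chSeq ω σ t) atTop ≠ (⊤ : EReal)) ∧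
    limsup (fun n : ℕ => ((1 / (n : ℝ) : ℝ) : EReal) * elog (Pmin (ω n) (σ n))) atTop ≤
      ⨅ t ∈ Set.Icc (0 : ℝ) 1, limsup (chSeq ω σ t) atTop :=
  have hβ₀ : 0 < β := one_pos.trans_le hβ
  chernoff_upper_bound_of_upperFact_general (fun n hn => (hω n hn).1) (fun n hn => (hσ n hn).1)
    hβ₀ hβ₀ hωf hσf
end
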